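/- Let n ≥ 3 and let F be a field whose characteristic does not divide 2n. Then the length of the group algebra F D_n of the dihedral group of order 2n equals n; precisely, every generating set S of F D_n satisfies l(S) ≤ n, and there exists a generating set with l(S) = n. -/

import Mathlib

/-!
Write `L_k = U ^ k` with `U = span ({1} ∪ S)`.

**Upper bound.** Suppose `L_n ≠ ⊤` and let `l + 2 > n` be the least index with `L_{l+2} = ⊤`. If a
layer `L_{j+1} / L_j` is at most one-dimensional, so is the next one (`thin_succ`, applied with
`Y = U`). As `dim F D_n = 2n` and `dim U ≥ 3`, a dimension count makes the layer
`L_{l+1} / L_l` one-dimensional (`thin_top`). Then a nonzero functional `f` on the top layer is of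
rank one: `f (u_1 ⋯ u_{l+2}) = κ β(u_1) ⋯ β(u_{l+2})` for a linear form `β` (`exists_rank_one`), and
so some `x ∈ U` has `x ^ (l + 2) ∉ L_{l+1}`.

The algebra `F D_n` is embedded in `End V × F × F`, where `V` is the `n`-dimensional permutation
representation on the vertices of the `n`-gon and the two factors `F` are characters `ε₁`, `ε₂`
with value `-1` at the reflection `sr 0`. By Cayley–Hamilton every element is a root of a monic polynomial
of degree `n + 2`, so `l + 1 = n`. Comparing `P`, `x P` and `P y`, where `P` is the characteristic
polynomial of `x` on `V` evaluated at `x`, shows `ε₁ y = ε₂ y` for all `y ∈ U ∩ ker β`. Hence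
`U = ⟨1, x⟩ + Y` with `Y ⊆ U` killed by `β`, `ε₁` and `ε₂`.

Now consider the span `W_j` of the words in `U` with `j + 1` letters, at least one of them from `Y`.
If `W_{n+1} = W_n`, then `W_n` is a two-sided ideal with commutative quotient; such a quotient of
`F D_n` has dimension at most `4 ≤ n + 1`, and `f` kills `W_n`, which forces `f (x ^ (n + 1)) = 0`,
a contradiction. So `W` grows up to step `n + 1`, the dimension count makes `W_n / W_{n-1}`
one-dimensional, and `exists_pow_notMem` gives `z ∈ U`, `y ∈ Y` with `z ^ (n + 1) y ∉ W_n` or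
`y z ^ (n + 1) ∉ W_n`. But the characteristic polynomial `p` of `z` on `V` has degree `n` and
`p(z) y = y p(z) = 0`, because `y` is killed by both characters; so both elements lie in `W_n`.

**Sharpness.** For the two reflections `sr 0`, `sr 1` the Cayley graph of `D_n` is a `2n`-cycle, so a
ball of radius `k < n` has at most `2k + 1 < 2n` elements and `L_k ≠ ⊤`.
-/

/-- `Lk F S k` is the `F`-linear span of all products of at most `k` elements of `S`
(the empty product `1` has length `0`); equivalently `V ^ k` with `V = span F ({1} ∪ S)`. -/
noncomputable def Lk (F : Type*) [Field F] {A : Type*} [Ring A] [Algebra F A]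
    (S : Set A) (k : ℕ) : Submodule F A :=
  (Submodule.span F ({1} ∪ S)) ^ k

/-- The length of a generating set `S`: the least `k` with `Lk F S k = ⊤`. -/
noncomputable def lenS (F : Type*) [Field F] {A : Type*} [Ring A] [Algebra F A]
    (S : Set A) : ℕ :=
  sInf {k | Lk F S k = ⊤}

/-- `mAlg F A` is the maximal degree over all `τ ∈ A` of the minimal polynomial of `τ`. -/
noncomputable def mAlg (F A : Type*) [Field F] [Ring A] [Algebra F A] : ℕ :=
  sSup {d | ∃ τ : A, d = (minpoly F τ).natDegree}

section abstract
variable {F A : Type*} [Field F] [Ring A] [Algebra F A]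

/-! ### The filtration by words with a distinguished letter -/

/-- For `Y ≤ U` with `1 ∈ U`: the span of all products of `j + 1` elements of `U`, at least one of
which lies in `Y`. For `Y = U` this is `U ^ (j + 1)`. -/
def wordFilt (U Y : Submodule F A) : ℕ → Submodule F A
  | 0 => Y
  | j + 1 => U * wordFilt U Y j ⊔ wordFilt U Y j * U

/-- For `P ≤ Q`: the quotient `Q / P` has dimension at most one. -/
def Thin (P Q : Submodule F A) : Prop := ∃ w ∈ Q, Q ≤ P ⊔ Submodule.span F {w}

section filt
variable {U Y : Submodule F A}

lemma mul_mem_wordFilt_left {j : ℕ} {u v : A} (hu : u ∈ U) (hv : v ∈ wordFilt U Y j) :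
    u * v ∈ wordFilt U Y (j + 1) :=
  Submodule.mem_sup_left (Submodule.mul_mem_mul hu hv)

lemma mul_mem_wordFilt_right {j : ℕ} {u v : A} (hu : u ∈ U) (hv : v ∈ wordFilt U Y j) :
    v * u ∈ wordFilt U Y (j + 1) :=
  Submodule.mem_sup_right (Submodule.mul_mem_mul hv hu)

lemma wordFilt_mono (h1 : (1 : A) ∈ U) : Monotone (wordFilt U Y) :=
  monotone_nat_of_le_succ fun j v hv => by
    simpa using mul_mem_wordFilt_left h1 hv

lemma wordFilt_succ_induction {j : ℕ} {p : Submodule F A}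
    (hl : ∀ u ∈ U, ∀ v ∈ wordFilt U Y j, u * v ∈ p)
    (hr : ∀ u ∈ U, ∀ v ∈ wordFilt U Y j, v * u ∈ p) : wordFilt U Y (j + 1) ≤ p :=
  sup_le (Submodule.mul_le.2 hl) (Submodule.mul_le.2 fun v hv u hu => hr u hu v hv)

lemma wordFilt_le_pow (hY : Y ≤ U) (j : ℕ) : wordFilt U Y j ≤ U ^ (j + 1) := by
  induction j with
  | zero => simpa [wordFilt] using hY
  | succ j ih =>
    refine sup_le ?_ ?_
    · rw [pow_succ' U (j + 1)]; exact mul_le_mul' le_rfl ih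
    · rw [pow_succ U (j + 1)]; exact mul_le_mul' ih le_rfl

lemma mul_pow_le_wordFilt (j : ℕ) : Y * U ^ j ≤ wordFilt U Y j := by
  induction j with
  | zero => simp [wordFilt]
  | succ j ih =>
    rw [pow_succ, ← mul_assoc]
    exact (mul_le_mul' ih le_rfl).trans le_sup_right

lemma pow_mul_le_wordFilt (j : ℕ) : U ^ j * Y ≤ wordFilt U Y j := by
  induction j with
  | zero => simp [wordFilt]
  | succ j ih =>
    rw [pow_succ', mul_assoc]
    exact (mul_le_mul' le_rfl ih).trans le_sup_left

/-- A word that starts with a letter from `Y` can give up its last letter and still contain a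
letter from `Y`. -/
lemma mul_mem_filt_mul (hY : Y ≤ U) {j : ℕ} {y v : A} (hy : y ∈ Y) (hv : v ∈ wordFilt U Y j) :
    y * v ∈ wordFilt U Y j * U := by
  have h := Submodule.mul_mem_mul hy (wordFilt_le_pow hY j hv)
  rw [pow_succ, ← mul_assoc] at h
  exact mul_le_mul' (mul_pow_le_wordFilt j) le_rfl h

lemma mul_mem_mul_filt (hY : Y ≤ U) {j : ℕ} {y v : A} (hy : y ∈ Y) (hv : v ∈ wordFilt U Y j) :
    v * y ∈ U * wordFilt U Y j := by
  have h := Submodule.mul_mem_mul (wordFilt_le_pow hY j hv) hy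
  rw [pow_succ', mul_assoc] at h
  exact mul_le_mul' le_rfl (pow_mul_le_wordFilt j) h

lemma wordFilt_self (U : Submodule F A) (j : ℕ) : wordFilt U U j = U ^ (j + 1) := by
  induction j with
  | zero => simp [wordFilt]
  | succ j ih => rw [wordFilt, ih, ← pow_succ, ← pow_succ', sup_idem]

end filt

/-- The coordinate along `w` when `Q` is contained in `P + F w`. -/
lemma exists_coord {P Q : Submodule F A} {w : A} (hw : w ∉ P)
    (hQ : Q ≤ P ⊔ Submodule.span F {w}) :
    ∃ θ : A →ₗ[F] F, (∀ v ∈ P, θ v = 0) ∧ θ w = 1 ∧ ∀ v ∈ Q, v - θ v • w ∈ P := by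
  obtain ⟨f, hf, hP⟩ := Submodule.exists_le_ker_of_notMem hw
  have hP' : ∀ v ∈ P, f v = 0 := fun v hv => hP hv
  refine ⟨(f w)⁻¹ • f, fun v hv => by simp [hP' v hv], by simp [hf], fun v hv => ?_⟩
  obtain ⟨p, hp, q, hq, rfl⟩ := Submodule.mem_sup.1 (hQ hv)
  obtain ⟨c, rfl⟩ := Submodule.mem_span_singleton.1 hq
  have : ((f w)⁻¹ • f) (p + c • w) = c := by simp [hP' p hp]; field_simp
  rw [this]; simpa using hp

/-- Let `w` span `Q` modulo `P`, with coordinate `θ`, and let `f` be a functional on the next layer.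
Then `f` factors through `θ` on both sides; evaluating `f (u * v * u')` in two ways gives a
compatibility between `θ` and the forms `f (· * w)` and `f (w * ·)`. -/
lemma pairing {U P Q : Submodule F A} {w : A} {θ f : A →ₗ[F] F}
    (hPl : ∀ u ∈ U, ∀ v ∈ P, u * v ∈ Q) (hPr : ∀ u ∈ U, ∀ v ∈ P, v * u ∈ Q)
    (hθ : ∀ v ∈ Q, v - θ v • w ∈ P) (hf : ∀ v ∈ Q, f v = 0) :
    (∀ u ∈ U, ∀ v ∈ Q, f (u * v) = f (u * w) * θ v) ∧
    (∀ u ∈ U, ∀ v ∈ Q, f (v * u) = θ v * f (w * u)) ∧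
    (∀ u ∈ U, ∀ v ∈ P, ∀ u' ∈ U, f (u * w) * θ (v * u') = θ (u * v) * f (w * u')) := by
  have h1 : ∀ u ∈ U, ∀ v ∈ Q, f (u * v) = f (u * w) * θ v := fun u hu v hv => by
    have := hf _ (hPl u hu _ (hθ v hv))
    simp only [mul_sub, map_sub, mul_smul_comm, map_smul, smul_eq_mul] at this
    linear_combination this
  have h2 : ∀ u ∈ U, ∀ v ∈ Q, f (v * u) = θ v * f (w * u) := fun u hu v hv => by
    have := hf _ (hPr u hu _ (hθ v hv))
    simp only [sub_mul, map_sub, smul_mul_assoc, map_smul, smul_eq_mul] at this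
    linear_combination this
  refine ⟨h1, h2, fun u hu v hv u' hu' => ?_⟩
  rw [← h1 u hu _ (hPr u' hu' v hv), ← h2 u' hu' _ (hPl u hu v hv), mul_assoc]

/-! ### Thin layers propagate -/

section step
variable {U Y : Submodule F A} {x : A}

lemma kills_mul {U P : Submodule F A} {f : A →ₗ[F] F} (h : ∀ u ∈ U, ∀ v ∈ P, f (u * v) = 0) :
    ∀ a ∈ U * P, f a = 0 :=
  fun _ ha => (Submodule.mul_le (P := LinearMap.ker f)).2 (fun u hu v hv => h u hu v hv) ha

/-- If a layer of the filtration is at most one-dimensional, so is the next one: some word `w'` has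
the property that a functional killing the previous layer and `w'` kills everything. The cases
are whether the coordinate `θ` of the thin layer vanishes on left, on right, or on neither
products. -/
lemma thin_succ (hY : Y ≤ U) (hx : x ∈ U)
    (hU : ∀ u ∈ U, ∃ c d : F, ∃ y ∈ Y, u = c • 1 + d • x + y) {j : ℕ}
    (h : Thin (wordFilt U Y j) (wordFilt U Y (j + 1))) :
    Thin (wordFilt U Y (j + 1)) (wordFilt U Y (j + 2)) := by
  obtain ⟨w, hwQ, hQ⟩ := h
  by_cases hw : w ∈ wordFilt U Y j
  · have hle : wordFilt U Y (j + 1) ≤ wordFilt U Y j :=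
      hQ.trans (sup_le le_rfl (by simpa using hw))
    refine ⟨0, zero_mem _, le_sup_of_le_left ?_⟩
    exact wordFilt_succ_induction (fun u hu v hv => mul_mem_wordFilt_left hu (hle hv))
      (fun u hu v hv => mul_mem_wordFilt_right hu (hle hv))
  obtain ⟨θ, hθP, hθw, hθ⟩ := exists_coord hw hQ
  have key : ∀ f : A →ₗ[F] F, (∀ v ∈ wordFilt U Y (j + 1), f v = 0) → _ := fun f hf =>
    pairing (U := U) (fun u hu v hv => mul_mem_wordFilt_left hu hv)
      (fun u hu v hv => mul_mem_wordFilt_right hu hv) hθ hf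
  -- A functional that vanishes on `w'` and on the smaller layer vanishes on the larger one.
  have fin : ∀ w' ∈ wordFilt U Y (j + 2), (∀ f : A →ₗ[F] F,
      (∀ v ∈ wordFilt U Y (j + 1), f v = 0) → f w' = 0 →
        (∀ u ∈ U, f (u * w) = 0) ∧ (∀ u ∈ U, f (w * u) = 0)) →
      Thin (wordFilt U Y (j + 1)) (wordFilt U Y (j + 2)) := by
    intro w' hw' H
    refine ⟨w', hw', fun v hv => ?_⟩
    by_contra hcon
    obtain ⟨f, hfv, hfk⟩ := Submodule.exists_le_ker_of_notMem hcon
    have hf : ∀ v ∈ wordFilt U Y (j + 1), f v = 0 := fun v hv => hfk (Submodule.mem_sup_left hv)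
    have hf' : f w' = 0 :=
      hfk (Submodule.mem_sup_right (Submodule.mem_span_singleton_self w'))
    obtain ⟨ha, hb⟩ := H f hf hf'
    obtain ⟨k1, k2, -⟩ := key f hf
    refine hfv (wordFilt_succ_induction (p := LinearMap.ker f) ?_ ?_ hv)
    · intro u hu v hv; simp [k1 u hu v hv, ha u hu]
    · intro u hu v hv; simp [k2 u hu v hv, hb u hu]
  by_cases hl : ∀ u ∈ U, ∀ v ∈ wordFilt U Y j, θ (u * v) = 0
  · have hr : ∃ u ∈ U, ∃ v ∈ wordFilt U Y j, θ (v * u) ≠ 0 := by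
      by_contra! hr
      have : w ∈ LinearMap.ker θ := wordFilt_succ_induction (p := LinearMap.ker θ) hl hr hwQ
      simp [hθw] at this
    obtain ⟨u0, hu0, v0, hv0, h0⟩ := hr
    refine fin (w * x) (mul_mem_wordFilt_right hx hwQ) fun f hf hfw => ?_
    obtain ⟨k1, k2, k3⟩ := key f hf
    have ha : ∀ u ∈ U, f (u * w) = 0 := fun u hu => by
      have := k3 u hu v0 hv0 u0 hu0
      rw [hl u hu v0 hv0, zero_mul] at this
      exact (mul_eq_zero.1 this).resolve_right h0
    refine ⟨ha, fun u hu => ?_⟩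
    obtain ⟨c, d, y, hy, rfl⟩ := hU u hu
    have hwy : f (w * y) = 0 := kills_mul (P := wordFilt U Y (j + 1))
      (fun u hu v hv => by rw [k1 u hu v hv, ha u hu, zero_mul]) _ (mul_mem_mul_filt hY hy hwQ)
    simp [mul_add, hfw, hwy, hf w hwQ]
  by_cases hr : ∀ u ∈ U, ∀ v ∈ wordFilt U Y j, θ (v * u) = 0
  · push Not at hl
    obtain ⟨u0, hu0, v0, hv0, h0⟩ := hl
    refine fin (x * w) (mul_mem_wordFilt_left hx hwQ) fun f hf hfw => ?_
    obtain ⟨k1, k2, k3⟩ := key f hf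
    have hb : ∀ u ∈ U, f (w * u) = 0 := fun u hu => by
      have := k3 u0 hu0 v0 hv0 u hu
      rw [hr u hu v0 hv0, mul_zero] at this
      exact (mul_eq_zero.1 this.symm).resolve_left h0
    refine ⟨fun u hu => ?_, hb⟩
    obtain ⟨c, d, y, hy, rfl⟩ := hU u hu
    have hwy : f (y * w) = 0 := kills_mul (U := wordFilt U Y (j + 1)) (P := U)
      (fun v hv u hu => by rw [k2 u hu v hv, hb u hu, mul_zero]) _ (mul_mem_filt_mul hY hy hwQ)
    simp [add_mul, hfw, hwy, hf w hwQ]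
  · push Not at hl hr
    obtain ⟨u0, hu0, v0, hv0, h0⟩ := hl
    obtain ⟨u1, hu1, v1, hv1, h1'⟩ := hr
    refine fin (w * u1) (mul_mem_wordFilt_right hu1 hwQ) fun f hf hfw => ?_
    obtain ⟨k1, k2, k3⟩ := key f hf
    have ha : ∀ u ∈ U, f (u * w) = 0 := fun u hu => by
      have := k3 u hu v1 hv1 u1 hu1
      rw [hfw, mul_zero] at this
      exact (mul_eq_zero.1 this).resolve_right h1'
    refine ⟨ha, fun u hu => ?_⟩
    have := k3 u0 hu0 v0 hv0 u hu
    rw [ha u0 hu0, zero_mul] at this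
    exact (mul_eq_zero.1 this.symm).resolve_left h0

lemma finrank_add_two_le [FiniteDimensional F A] {P Q : Submodule F A} (hPQ : P ≤ Q)
    (h : ¬ Thin P Q) : Module.finrank F P + 2 ≤ Module.finrank F Q := by
  have hne : ¬ Q ≤ P := fun hle => h ⟨0, zero_mem _, le_sup_of_le_left hle⟩
  obtain ⟨v, hvQ, hvP⟩ := Set.not_subset.1 hne
  have a : P < P ⊔ Submodule.span F {v} :=
    lt_of_le_of_ne le_sup_left fun he => hvP (he ▸
      Submodule.mem_sup_right (Submodule.mem_span_singleton_self v))
  have b : P ⊔ Submodule.span F {v} < Q :=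
    lt_of_le_not_ge (sup_le hPQ (by simpa using hvQ)) fun hle => h ⟨v, hvQ, hle⟩
  have := Submodule.finrank_lt_finrank_of_lt a
  have := Submodule.finrank_lt_finrank_of_lt b
  omega

/-- If the filtration still grows at step `m + 2`, then its layers up to there cannot all have
dimension at least two, for lack of room; so the layer at step `m + 1` is thin. -/
lemma thin_top [FiniteDimensional F A] (h1 : (1 : A) ∈ U) (hY : Y ≤ U) (hx : x ∈ U)
    (hU : ∀ u ∈ U, ∃ c d : F, ∃ y ∈ Y, u = c • 1 + d • x + y) {m : ℕ}
    (hne : ¬ wordFilt U Y (m + 2) ≤ wordFilt U Y (m + 1))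
    (hdim : Module.finrank F A < Module.finrank F Y + 2 * m + 3) :
    Thin (wordFilt U Y m) (wordFilt U Y (m + 1)) := by
  by_contra hcon
  have hall : ∀ k ≤ m, ¬ Thin (wordFilt U Y (m - k)) (wordFilt U Y (m - k + 1)) := by
    intro k
    induction k with
    | zero => simpa using hcon
    | succ k ih =>
      intro hk ht
      have := thin_succ hY hx hU ht
      rw [show m - (k + 1) + 1 = m - k by omega,
        show m - (k + 1) + 2 = m - k + 1 by omega] at this
      exact ih (by omega) this
  have hd : ∀ k ≤ m + 1, Module.finrank F Y + 2 * k ≤ Module.finrank F (wordFilt U Y k) := by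
    intro k
    induction k with
    | zero => intro _; exact le_rfl
    | succ k ih =>
      intro hk
      have h := hall (m - k) (by omega)
      rw [show m - (m - k) = k by omega] at h
      have := finrank_add_two_le (wordFilt_mono h1 (show k ≤ k + 1 by omega)) h
      have := ih (by omega)
      omega
  have h3 := Submodule.finrank_lt_finrank_of_lt
    (lt_of_le_not_ge (wordFilt_mono (Y := Y) h1 (show m + 1 ≤ m + 2 by omega)) hne)
  have h4 := hd (m + 1) le_rfl
  have h5 := Submodule.finrank_le (wordFilt U Y (m + 2))
  omega
end step

/-! ### Powers that survive in the top layer -/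

section tail
variable {U Y : Submodule F A} {x : A}

lemma pow_mul_mem_wordFilt {u v : A} (hu : u ∈ U) {s k m : ℕ} (hm : s + k = m)
    (hv : v ∈ wordFilt U Y k) : u ^ s * v ∈ wordFilt U Y m := by
  induction s generalizing m with
  | zero => obtain rfl : k = m := by omega
            simpa using hv
  | succ s ih =>
    obtain rfl : s + k + 1 = m := by omega
    rw [pow_succ', mul_assoc]
    exact mul_mem_wordFilt_left hu (ih rfl)

lemma mul_pow_mem_wordFilt {u v : A} (hu : u ∈ U) {s k m : ℕ} (hm : s + k = m)
    (hv : v ∈ wordFilt U Y k) : v * u ^ s ∈ wordFilt U Y m := by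
  induction s generalizing m with
  | zero => obtain rfl : k = m := by omega
            simpa using hv
  | succ s ih =>
    obtain rfl : s + k + 1 = m := by omega
    rw [pow_succ, ← mul_assoc]
    exact mul_mem_wordFilt_right hu (ih rfl)

/-- If the layer at step `m + 1` is thin and the one at step `m + 2` is nonzero, then the latter is
not killed by all words `z ⋯ z y` and `y z ⋯ z`. If it were, the compatibility of `pairing` would let
the letter `x` (or a letter `c ∈ Y`, or `x` on the right) move through any word spanning the thin
layer, and the coordinate of that layer would vanish. -/
lemma exists_pow_notMem (hY : Y ≤ U) (hx : x ∈ U)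
    (hU : ∀ u ∈ U, ∃ c d : F, ∃ y ∈ Y, u = c • 1 + d • x + y) {m : ℕ}
    (hne : ¬ wordFilt U Y (m + 2) ≤ wordFilt U Y (m + 1))
    (ht : Thin (wordFilt U Y m) (wordFilt U Y (m + 1))) :
    ∃ z ∈ U, ∃ y ∈ Y, z ^ (m + 2) * y ∉ wordFilt U Y (m + 1) ∨
      y * z ^ (m + 2) ∉ wordFilt U Y (m + 1) := by
  obtain ⟨w, hwQ, hQ⟩ := ht
  have hw : w ∉ wordFilt U Y m := fun hw => hne <| by
    have hle : wordFilt U Y (m + 1) ≤ wordFilt U Y m :=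
      hQ.trans (sup_le le_rfl (by simpa using hw))
    exact wordFilt_succ_induction (fun u hu v hv => mul_mem_wordFilt_left hu (hle hv))
      (fun u hu v hv => mul_mem_wordFilt_right hu (hle hv))
  obtain ⟨θ, hθP, hθw, hθ⟩ := exists_coord hw hQ
  obtain ⟨t, htQ, htP⟩ := Set.not_subset.1 hne
  obtain ⟨f, hft, hfk⟩ := Submodule.exists_le_ker_of_notMem htP
  have hf : ∀ v ∈ wordFilt U Y (m + 1), f v = 0 := fun v hv => hfk hv
  obtain ⟨k1, k2, k3⟩ := pairing (U := U) (fun u hu v hv => mul_mem_wordFilt_left hu hv)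
      (fun u hu v hv => mul_mem_wordFilt_right hu hv) hθ hf
  by_contra! hcon
  have hzy : ∀ z ∈ U, ∀ y ∈ Y, f (z * w) * θ (z ^ (m + 1) * y) = 0 := fun z hz y hy => by
    rw [← k1 z hz _ (pow_mul_mem_wordFilt hz (k := 0) rfl hy), ← mul_assoc, ← pow_succ']
    exact hf _ (hcon z hz y hy).1
  have hyz : ∀ z ∈ U, ∀ y ∈ Y, θ (y * z ^ (m + 1)) * f (w * z) = 0 := fun z hz y hy => by
    rw [← k2 z hz _ (mul_pow_mem_wordFilt hz (k := 0) rfl hy), mul_assoc, ← pow_succ]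
    exact hf _ (hcon z hz y hy).2
  -- First case: left multiplication by `x` reaches the top layer.
  by_cases hax : f (x * w) = 0
  swap
  · have claim : ∀ k s, s + k = m + 1 → ∀ v ∈ wordFilt U Y k, θ (x ^ s * v) = 0 := by
      intro k
      induction k with
      | zero =>
        intro s hs v hv
        obtain rfl : s = m + 1 := by omega
        exact (mul_eq_zero.1 (hzy x hx v hv)).resolve_left hax
      | succ k ih =>
        intro s hs v hv
        have hr : ∀ v ∈ wordFilt U Y k, ∀ u ∈ U, θ (x ^ s * (v * u)) = 0 := by
          intro v hv u hu
          have h3 := k3 x hx (x ^ s * v)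
            (pow_mul_mem_wordFilt hx (by omega) hv) u hu
          rw [← mul_assoc x, ← pow_succ', ih (s + 1) (by omega) v hv, zero_mul] at h3
          rw [← mul_assoc]
          exact (mul_eq_zero.1 h3).resolve_left hax
        have hr' := kills_mul (f := θ ∘ₗ LinearMap.mulLeft F (x ^ s)) hr
        refine wordFilt_succ_induction (p := LinearMap.ker (θ ∘ₗ LinearMap.mulLeft F (x ^ s)))
          ?_ (fun u hu v hv => hr v hv u hu) hv
        intro u hu v hv
        obtain ⟨c, d, y, hy, rfl⟩ := hU u hu
        have e1 : θ (x ^ s * v) = 0 := hθP _ (pow_mul_mem_wordFilt hx (by omega) hv)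
        have e2 : θ (x ^ s * (x * v)) = 0 := by
          rw [← mul_assoc, ← pow_succ]; exact ih (s + 1) (by omega) v hv
        have e3 : θ (x ^ s * (y * v)) = 0 := hr' _ (mul_mem_filt_mul hY hy hv)
        simp [add_mul, mul_add, e1, e2, e3]
    have := claim (m + 1) 0 (by omega) w hwQ
    simp [hθw] at this
  -- Second case: left multiplication by some `c ∈ Y` does.
  by_cases hay : ∀ y ∈ Y, f (y * w) = 0
  swap
  · push Not at hay
    obtain ⟨c, hc, hcw⟩ := hay
    have hcU := hY hc
    have hmem : ∀ k, ∀ v ∈ U ^ k, c * v ∈ wordFilt U Y k := fun k v hv =>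
      mul_pow_le_wordFilt k (Submodule.mul_mem_mul hc hv)
    have claim : ∀ k s, s + k = m + 1 → ∀ v ∈ U ^ k, θ (c ^ s * (c * v)) = 0 := by
      intro k
      induction k with
      | zero =>
        intro s hs v hv
        obtain rfl : s = m + 1 := by omega
        rw [pow_zero] at hv
        obtain ⟨a, rfl⟩ := Submodule.mem_one.1 hv
        have := (mul_eq_zero.1 (hzy c hcU c hc)).resolve_left hcw
        simp [Algebra.algebraMap_eq_smul_one, this]
      | succ k ih =>
        intro s hs v hv
        rw [pow_succ] at hv
        refine kills_mul (f := θ ∘ₗ LinearMap.mulLeft F (c ^ s) ∘ₗ LinearMap.mulLeft F c)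
          ?_ v hv
        intro v hv u hu
        have h3 := k3 c hcU (c ^ s * (c * v))
          (pow_mul_mem_wordFilt hcU (by omega) (hmem k v hv)) u hu
        rw [← mul_assoc c, ← pow_succ', ih (s + 1) (by omega) v hv, zero_mul] at h3
        have := (mul_eq_zero.1 h3).resolve_left hcw
        simpa [mul_assoc] using this
    refine hcw (kills_mul (f := f ∘ₗ LinearMap.mulLeft F c) (U := U ^ (m + 1)) (P := U) ?_ w ?_)
    · intro v hv u hu
      have h2 := k2 u hu (c * v) (hmem _ v hv)
      have h3 := claim (m + 1) 0 (by omega) v hv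
      rw [pow_zero, one_mul] at h3
      rw [h3, zero_mul, mul_assoc] at h2
      simpa using h2
    · rw [← pow_succ]; exact wordFilt_le_pow hY _ hwQ
  -- Third case: only right multiplication does, and then right multiplication by `x`.
  have ha : ∀ u ∈ U, f (u * w) = 0 := by
    intro u hu
    obtain ⟨c, d, y, hy, rfl⟩ := hU u hu
    simp [add_mul, hax, hay y hy, hf w hwQ]
  have hb : ∃ u ∈ U, f (w * u) ≠ 0 := by
    by_contra! hb
    refine hft (wordFilt_succ_induction (p := LinearMap.ker f) ?_ ?_ htQ)
    · intro u hu v hv; simp [k1 u hu v hv, ha u hu]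
    · intro u hu v hv; simp [k2 u hu v hv, hb u hu]
  have hby : ∀ y ∈ Y, f (w * y) = 0 := fun y hy => kills_mul (P := wordFilt U Y (m + 1))
      (fun u hu v hv => by rw [k1 u hu v hv, ha u hu, zero_mul]) _ (mul_mem_mul_filt hY hy hwQ)
  obtain ⟨u0, hu0, hb0⟩ := hb
  have hl : ∀ u ∈ U, ∀ v ∈ wordFilt U Y m, θ (u * v) = 0 := fun u hu v hv => by
    have := k3 u hu v hv u0 hu0
    rw [ha u hu, zero_mul] at this
    exact (mul_eq_zero.1 this.symm).resolve_right hb0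
  have hbx : f (w * x) ≠ 0 := fun hbx => hb0 <| by
    obtain ⟨c, d, y, hy, rfl⟩ := hU u0 hu0
    simp [mul_add, hbx, hby y hy, hf w hwQ]
  have claim : ∀ k s, s + k = m + 1 → ∀ v ∈ wordFilt U Y k, θ (v * x ^ s) = 0 := by
    intro k
    induction k with
    | zero =>
      intro s hs v hv
      obtain rfl : s = m + 1 := by omega
      exact (mul_eq_zero.1 (hyz x hx v hv)).resolve_right hbx
    | succ k ih =>
      intro s hs v hv
      have hr : ∀ u ∈ U, ∀ v ∈ wordFilt U Y k, θ (u * v * x ^ s) = 0 := fun u hu v hv => by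
        rw [mul_assoc]
        exact hl u hu _ (mul_pow_mem_wordFilt hx (by omega) hv)
      have hr' := kills_mul (f := θ ∘ₗ LinearMap.mulRight F (x ^ s)) hr
      refine wordFilt_succ_induction (p := LinearMap.ker (θ ∘ₗ LinearMap.mulRight F (x ^ s)))
        hr ?_ hv
      intro u hu v hv
      obtain ⟨c, d, y, hy, rfl⟩ := hU u hu
      have e1 : θ (v * x ^ s) = 0 := hθP _ (mul_pow_mem_wordFilt hx (by omega) hv)
      have e2 : θ (v * x * x ^ s) = 0 := by
        rw [mul_assoc, ← pow_succ']; exact ih (s + 1) (by omega) v hv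
      have e3 : θ (v * y * x ^ s) = 0 := hr' _ (mul_mem_mul_filt hY hy hv)
      simp [add_mul, mul_add, e1, e2, e3]
  have := claim (m + 1) 0 (by omega) w hwQ
  simp [hθw] at this

/-- If the layer `U ^ (l + 1) / U ^ l` is thin and the next one is nonzero, a functional `f` on the
latter depends, up to a scalar, on each letter of a word only through one linear form `β`. In
particular it does not vanish on a power of some `x ∈ U`. -/
lemma exists_rank_one {l : ℕ} (ht : Thin (U ^ l) (U ^ (l + 1)))
    (hne : ¬ U ^ (l + 2) ≤ U ^ (l + 1)) :
    ∃ (f β : A →ₗ[F] F), ∃ x ∈ U, (∀ v ∈ U ^ (l + 1), f v = 0) ∧ f (x ^ (l + 2)) ≠ 0 ∧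
      β x = 1 ∧ β 1 = 0 ∧ ∀ p q, p + q = l + 1 → ∀ v ∈ U ^ p, ∀ y ∈ U, β y = 0 →
        ∀ v' ∈ U ^ q, f (v * y * v') = 0 := by
  obtain ⟨w, hwQ, hQ⟩ := ht
  have hw : w ∉ U ^ l := fun hw => hne <| by
    have hle : U ^ (l + 1) ≤ U ^ l := hQ.trans (sup_le le_rfl (by simpa using hw))
    rw [pow_succ U (l + 1), pow_succ U l]
    exact mul_le_mul' hle le_rfl
  obtain ⟨θ, hθP, hθw, hθ⟩ := exists_coord hw hQ
  obtain ⟨t, htQ, htP⟩ := Set.not_subset.1 hne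
  obtain ⟨f, hft, hfk⟩ := Submodule.exists_le_ker_of_notMem htP
  have hf : ∀ v ∈ U ^ (l + 1), f v = 0 := fun v hv => hfk hv
  have ml : ∀ k, ∀ u ∈ U, ∀ v ∈ U ^ k, u * v ∈ U ^ (k + 1) := fun k u hu v hv => by
    rw [pow_succ']; exact Submodule.mul_mem_mul hu hv
  have mr : ∀ k, ∀ u ∈ U, ∀ v ∈ U ^ k, v * u ∈ U ^ (k + 1) := fun k u hu v hv => by
    rw [pow_succ]; exact Submodule.mul_mem_mul hv hu
  obtain ⟨k1, k2, k3⟩ := pairing (U := U) (ml l) (mr l) hθ hf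
  obtain ⟨c, hc, hcw⟩ : ∃ c ∈ U, f (c * w) ≠ 0 := by
    by_contra! h
    rw [SetLike.mem_coe, pow_succ'] at htQ
    exact hft (kills_mul (fun u hu v hv => by rw [k1 u hu v hv, h u hu, zero_mul]) t htQ)
  obtain ⟨x, hx, hwx⟩ : ∃ x ∈ U, f (w * x) ≠ 0 := by
    by_contra! h
    rw [SetLike.mem_coe, pow_succ] at htQ
    exact hft (kills_mul (fun v hv u hu => by rw [k2 u hu v hv, h u hu, mul_zero]) t htQ)
  have hy : ∀ q p, p + q = l → ∀ v ∈ U ^ p, ∀ y ∈ U, f (w * y) = 0 →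
      ∀ v' ∈ U ^ q, θ (v * y * v') = 0 := by
    intro q
    induction q with
    | zero =>
      intro p hp v hv y hy hy0 v' hv'
      obtain rfl : p = l := by omega
      rw [pow_zero] at hv'
      obtain ⟨a, rfl⟩ := Submodule.mem_one.1 hv'
      have := k3 c hc v hv y hy
      rw [hy0, mul_zero] at this
      simp [Algebra.algebraMap_eq_smul_one, (mul_eq_zero.1 this).resolve_left hcw]
    | succ q ih =>
      intro p hp v hv y hy hy0 v' hv'
      rw [pow_succ] at hv'
      refine kills_mul (f := θ ∘ₗ LinearMap.mulLeft F (v * y)) ?_ v' hv'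
      intro v' hv' u hu
      have hm : v * y * v' ∈ U ^ l := by
        rw [show l = p + 1 + q by omega, pow_add]
        exact Submodule.mul_mem_mul (mr _ y hy v hv) hv'
      have h3 := k3 c hc _ hm u hu
      have h4 := ih (p + 1) (by omega) (c * v) (ml _ c hc v hv) y hy hy0 v' hv'
      rw [show c * (v * y * v') = c * v * y * v' by simp only [mul_assoc], h4, zero_mul] at h3
      simpa [mul_assoc] using (mul_eq_zero.1 h3).resolve_left hcw
  have hxl : θ (x ^ (l + 1)) ≠ 0 := by
    intro h0
    have claim : ∀ p q, p + q = l + 1 → ∀ v ∈ U ^ p, θ (v * x ^ q) = 0 := by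
      intro p
      induction p with
      | zero =>
        intro q hq v hv
        obtain rfl : q = l + 1 := by omega
        rw [pow_zero] at hv
        obtain ⟨a, rfl⟩ := Submodule.mem_one.1 hv
        simp [Algebra.algebraMap_eq_smul_one, h0]
      | succ p ih =>
        intro q hq v hv
        rw [pow_succ] at hv
        refine kills_mul (f := θ ∘ₗ LinearMap.mulRight F (x ^ q)) ?_ v hv
        intro v hv u hu
        have e1 := ih (q + 1) (by omega) v hv
        have e2 := hy q p (by omega) v hv (u - (f (w * u) / f (w * x)) • x)
          (sub_mem hu (Submodule.smul_mem _ _ hx))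
          (by simp [mul_sub]; field_simp; ring) (x ^ q) (Submodule.pow_mem_pow _ hx q)
        simp only [mul_sub, sub_mul, map_sub, mul_smul_comm, smul_mul_assoc, map_smul] at e2
        rw [mul_assoc v x, ← pow_succ', e1] at e2
        simpa using e2
    have := claim (l + 1) 0 (by omega) w hwQ
    simp [hθw] at this
  refine ⟨f, f ∘ₗ LinearMap.mulLeft F w, (f (w * x))⁻¹ • x, Submodule.smul_mem _ _ hx, hf, ?_,
    by simp [hwx], by simp [hf w hwQ], ?_⟩
  · have := k2 x hx _ (Submodule.pow_mem_pow _ hx (l + 1))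
    rw [← pow_succ] at this
    rw [smul_pow, map_smul, this]
    simp [hxl, hwx]
  · intro p q hpq v hv y hyU hy0 v' hv'
    simp only [LinearMap.comp_apply, LinearMap.mulLeft_apply] at hy0
    cases q with
    | zero =>
      obtain rfl : p = l + 1 := by omega
      rw [pow_zero] at hv'
      obtain ⟨a, rfl⟩ := Submodule.mem_one.1 hv'
      simp [Algebra.algebraMap_eq_smul_one, k2 y hyU v hv, hy0]
    | succ q =>
      rw [pow_succ] at hv'
      refine kills_mul (f := f ∘ₗ LinearMap.mulLeft F (v * y)) ?_ v' hv'
      intro v' hv' u hu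
      have hm : v * y * v' ∈ U ^ (l + 1) := by
        rw [show l + 1 = p + 1 + q by omega, pow_add]
        exact Submodule.mul_mem_mul (mr _ y hyU v hv) hv'
      have h2 := k2 u hu _ hm
      rw [hy q p (by omega) v hv y hyU hy0 v' hv', zero_mul] at h2
      simpa [mul_assoc] using h2
end tail

/-! ### The upper bound for an abstract algebra -/

section bound
open Polynomial
variable {U Y : Submodule F A} {x : A}

lemma wordFilt_le_of (j : ℕ) {N : Submodule F A}
    (h : ∀ p q, p + q = j → ∀ v ∈ U ^ p, ∀ y ∈ Y, ∀ v' ∈ U ^ q, v * y * v' ∈ N) :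
    wordFilt U Y j ≤ N := by
  induction j generalizing N with
  | zero =>
    intro y hy
    have h0 : (1 : A) ∈ U ^ 0 := by rw [pow_zero]; exact Submodule.one_le.1 le_rfl
    simpa using h 0 0 rfl 1 h0 y hy 1 h0
  | succ j ih =>
    refine wordFilt_succ_induction ?_ ?_
    · intro u hu v hv
      refine ih (N := N.comap (LinearMap.mulLeft F u)) ?_ hv
      intro p q hpq v hv y hy v' hv'
      have := h (p + 1) q (by omega) (u * v)
        (by rw [pow_succ']; exact Submodule.mul_mem_mul hu hv) y hy v' hv'
      simpa [mul_assoc] using this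
    · intro u hu v hv
      refine ih (N := N.comap (LinearMap.mulRight F u)) ?_ hv
      intro p q hpq v hv y hy v' hv'
      have := h p (q + 1) (by omega) v hv y hy (v' * u)
        (by rw [pow_succ]; exact Submodule.mul_mem_mul hv' hu)
      simpa [mul_assoc] using this

lemma pow_mono_of_one_mem (h1 : (1 : A) ∈ U) : Monotone fun k : ℕ => U ^ k :=
  fun _ _ h => pow_le_pow_right' (Submodule.one_le.2 h1) h

lemma aeval_mem_pow (h1 : (1 : A) ∈ U) (hx : x ∈ U) {k : ℕ} {q : F[X]} (hq : q.natDegree ≤ k) :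
    aeval x q ∈ U ^ k := by
  rw [aeval_eq_sum_range]
  refine sum_mem fun i hi => Submodule.smul_mem _ _ ?_
  exact pow_mono_of_one_mem h1 (show i ≤ k by simp at hi; omega) (Submodule.pow_mem_pow _ hx i)

lemma natDegree_sub_X_pow_le {q : F[X]} {d : ℕ} (hq : q.Monic) (hd : q.natDegree = d + 1) :
    (q - X ^ (d + 1)).natDegree ≤ d := by
  have h := degree_sub_lt_left (p := q) (q := X ^ (d + 1)) (by
    rw [degree_X_pow, degree_eq_natDegree hq.ne_zero, hd]) hq.ne_zero (by simp [hq.leadingCoeff])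
  rw [degree_eq_natDegree hq.ne_zero, hd] at h
  by_cases h0 : q - X ^ (d + 1) = 0
  · simp [h0]
  · exact Nat.lt_succ_iff.1 ((natDegree_lt_iff_degree_lt h0).2 h)

lemma apply_aeval_monic (h1 : (1 : A) ∈ U) (hx : x ∈ U) {d : ℕ} {f : A →ₗ[F] F}
    (hf : ∀ v ∈ U ^ d, f v = 0) {q : F[X]} (hq : q.Monic) (hd : q.natDegree = d + 1) :
    f (aeval x q) = f (x ^ (d + 1)) := by
  have := hf _ (aeval_mem_pow h1 hx (natDegree_sub_X_pow_le hq hd))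
  simp only [map_sub, map_pow, aeval_X] at this
  exact sub_eq_zero.1 this

/-- In a quotient of dimension at most `k`, every element is a root of a monic polynomial of any
prescribed degree `d ≥ k`. -/
lemma exists_monic_aeval_mem [FiniteDimensional F A] {I : Submodule F A} {k : ℕ}
    (hI : Module.finrank F (A ⧸ I) ≤ k) (hl : ∀ a : A, ∀ v ∈ I, a * v ∈ I) (x : A) {d : ℕ}
    (hd : k ≤ d) : ∃ q : F[X], q.Monic ∧ q.natDegree = d ∧ aeval x q ∈ I := by
  let φ : (Fin (k + 1) → F) →ₗ[F] A ⧸ I :=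
    I.mkQ ∘ₗ (aeval x).toLinearMap ∘ₗ (degreeLT F (k + 1)).subtype ∘ₗ
      (degreeLTEquiv F (k + 1)).symm.toLinearMap
  have hker : LinearMap.ker φ ≠ ⊥ := LinearMap.ker_ne_bot_of_finrank_lt (by simp; omega)
  obtain ⟨c, hc, hc0⟩ := Submodule.exists_mem_ne_zero_of_ne_bot hker
  set r := (degreeLTEquiv F (k + 1)).symm c with hr
  have hr0 : (r : F[X]) ≠ 0 := by
    intro h
    apply hc0
    simpa [hr] using h
  have hrI : aeval x (r : F[X]) ∈ I := by
    have : φ c = 0 := hc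
    simpa [φ, ← hr] using this
  have hdeg : (r : F[X]).natDegree ≤ k := by
    have h := mem_degreeLT.1 r.2
    rw [degree_eq_natDegree hr0] at h
    have := WithBot.coe_lt_coe.1 h
    exact Nat.lt_succ_iff.1 (by exact_mod_cast h)
  refine ⟨X ^ (d - (r : F[X]).natDegree) * ((r : F[X]) * C (r : F[X]).leadingCoeff⁻¹),
    (monic_X_pow _).mul (monic_mul_leadingCoeff_inv hr0), ?_, ?_⟩
  · rw [(monic_X_pow _).natDegree_mul (monic_mul_leadingCoeff_inv hr0),
      natDegree_mul_leadingCoeff_inv _ hr0, natDegree_X_pow]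
    omega
  · rw [map_mul, mul_comm (r : F[X]), map_mul]
    exact hl _ _ (hl _ _ hrI)

/-- Two non-commuting elements of `U` are linearly independent together with `1`. -/
lemma three_le_finrank [FiniteDimensional F A] (h1 : (1 : A) ∈ U) {k : ℕ} (hk : U ^ k = ⊤)
    (hnc : ∃ a b : A, a * b ≠ b * a) : 3 ≤ Module.finrank F U := by
  have hcomm : ∀ b : A, (∀ u ∈ U, u * b = b * u) → ∀ a, a * b = b * a := by
    intro b hb a
    have : ∀ j, U ^ j ≤ LinearMap.ker (LinearMap.mulRight F b - LinearMap.mulLeft F b) := by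
      intro j
      induction j with
      | zero =>
        rw [pow_zero, Submodule.one_le]; simp
      | succ j ih =>
        rw [pow_succ]
        refine Submodule.mul_le.2 fun v hv u hu => ?_
        have h2 := ih hv
        simp only [LinearMap.mem_ker, LinearMap.sub_apply, LinearMap.mulRight_apply,
          LinearMap.mulLeft_apply, sub_eq_zero] at h2 ⊢
        rw [mul_assoc, hb u hu, ← mul_assoc, h2, mul_assoc]
    have h := this k (hk ▸ Submodule.mem_top : a ∈ U ^ k)
    simpa [sub_eq_zero] using h
  obtain ⟨u, hu, v, hv, huv⟩ : ∃ u ∈ U, ∃ v ∈ U, u * v ≠ v * u := by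
    by_contra! h
    obtain ⟨a, b, hab⟩ := hnc
    exact hab (hcomm b (fun u hu => (hcomm u (fun v hv => h v hv u hu) b).symm) a)
  have hli : LinearIndependent F ![(⟨1, h1⟩ : U), ⟨u, hu⟩, ⟨v, hv⟩] := by
    refine Fintype.linearIndependent_iff.2 fun g hg => ?_
    have hg' : g 0 • (1 : A) + g 1 • u + g 2 • v = 0 := by
      simpa [Fin.sum_univ_three] using congrArg Subtype.val hg
    have hne : u * v - v * u ≠ 0 := sub_ne_zero.2 huv
    have h2 : g 2 • (u * v - v * u) = 0 := by
      have e : u * (g 0 • (1 : A) + g 1 • u + g 2 • v) -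
        (g 0 • (1 : A) + g 1 • u + g 2 • v) * u = 0 := by rw [hg']; simp
      simp only [mul_add, add_mul, mul_smul_comm, smul_mul_assoc, mul_one, one_mul] at e
      rw [← e, smul_sub]; abel
    have h3 : g 1 • (u * v - v * u) = 0 := by
      have e : (g 0 • (1 : A) + g 1 • u + g 2 • v) * v -
        v * (g 0 • (1 : A) + g 1 • u + g 2 • v) = 0 := by rw [hg']; simp
      simp only [mul_add, add_mul, mul_smul_comm, smul_mul_assoc, mul_one, one_mul] at e
      rw [← e, smul_sub]; abel
    have e2 : g 2 = 0 := (smul_eq_zero.1 h2).resolve_right hne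
    have e1 : g 1 = 0 := (smul_eq_zero.1 h3).resolve_right hne
    have h10 : (1 : A) ≠ 0 := fun h => hne (by rw [← mul_one (u * v - v * u), h, mul_zero])
    have e0 : g 0 = 0 := by
      rw [e1, e2, zero_smul, zero_smul, add_zero, add_zero] at hg'
      exact (smul_eq_zero.1 hg').resolve_right h10
    intro i
    fin_cases i <;> assumption
  simpa using hli.fintype_card_le_finrank

/-- The upper bound for the length, for an algebra `A` of dimension `2 n` embedded in
`End V × F × F` with `dim V = n`, all of whose commutative quotients have dimension at most `4`. -/
lemma pow_eq_top [FiniteDimensional F A] {n : ℕ} (hn : 3 ≤ n) (hdim : Module.finrank F A = 2 * n)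
    {V : Type*} [AddCommGroup V] [Module F V] [FiniteDimensional F V]
    (hV : Module.finrank F V = n) (ρ : A →ₐ[F] Module.End F V) (ε₁ ε₂ : A →ₐ[F] F)
    (hfaith : ∀ a, ρ a = 0 → ε₁ a = 0 → ε₂ a = 0 → a = 0) (hnc : ∃ a b : A, a * b ≠ b * a)
    (hab : ∀ I : Submodule F A, (∀ a : A, ∀ v ∈ I, a * v ∈ I) → (∀ a : A, ∀ v ∈ I, v * a ∈ I) →
      (∀ a b : A, a * b - b * a ∈ I) → Module.finrank F (A ⧸ I) ≤ 4)
    (h1 : (1 : A) ∈ U) (hgen : ∃ k, U ^ k = ⊤) : U ^ n = ⊤ := by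
  classical
  by_contra hcon
  have hmono := pow_mono_of_one_mem h1
  obtain ⟨l, htop, hntop⟩ : ∃ l, U ^ (l + 2) = ⊤ ∧ U ^ (l + 1) ≠ ⊤ := by
    have h0 := Nat.find_spec hgen
    have hlt : n < Nat.find hgen := by
      by_contra! hle
      exact hcon (top_le_iff.1 (h0 ▸ hmono hle))
    refine ⟨Nat.find hgen - 2, ?_, Nat.find_min hgen (by omega)⟩
    rwa [show Nat.find hgen - 2 + 2 = Nat.find hgen by omega]
  have hln : n ≤ l + 1 := by
    by_contra! hlt
    exact hcon (top_le_iff.1 (htop ▸ hmono (show l + 2 ≤ n by omega)))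
  have hne : ¬ U ^ (l + 2) ≤ U ^ (l + 1) := fun h => hntop (top_le_iff.1 (htop ▸ h))
  have hthin : Thin (U ^ l) (U ^ (l + 1)) := by
    obtain ⟨m, rfl⟩ : ∃ m, l = m + 1 := ⟨l - 1, by omega⟩
    have h3 := three_le_finrank h1 htop hnc
    have := thin_top (U := U) (Y := U) (x := 1) h1 le_rfl h1
      (fun u hu => ⟨0, 0, u, hu, by simp⟩) (m := m) (by simpa only [wordFilt_self] using hne)
      (by omega)
    simpa only [wordFilt_self] using this
  obtain ⟨f, β, x, hx, hf, hfx, hβx, hβ1, hrank⟩ := exists_rank_one hthin hne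
  -- Cayley-Hamilton in the representation `V`.
  have hCH : ∀ z, ρ (aeval z (ρ z).charpoly) = 0 := fun z => by
    rw [← Polynomial.aeval_algHom_apply]; exact (ρ z).aeval_self_charpoly
  have hmon : ∀ z, (ρ z).charpoly.Monic := fun z => (ρ z).charpoly_monic
  have hdeg : ∀ z, (ρ z).charpoly.natDegree = n := fun z => by
    rw [LinearMap.charpoly_natDegree, hV]
  -- `x` is a root of a monic polynomial of degree `n + 2`, multiplied by a power of `X` if needed.
  obtain rfl : n = l + 1 := by
    refine le_antisymm hln ?_
    by_contra! hlt
    set g : F[X] := X ^ (l - n) * ((X - C (ε₁ x)) * ((X - C (ε₂ x)) * (ρ x).charpoly)) with hg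
    have m2 := (monic_X_sub_C (ε₂ x)).mul (hmon x)
    have m1 := (monic_X_sub_C (ε₁ x)).mul m2
    have hgm : g.Monic := (monic_X_pow _).mul m1
    have hgd : g.natDegree = l + 1 + 1 := by
      rw [hg, (monic_X_pow _).natDegree_mul m1, (monic_X_sub_C _).natDegree_mul m2,
        (monic_X_sub_C _).natDegree_mul (hmon x), natDegree_X_pow, natDegree_X_sub_C,
        natDegree_X_sub_C, hdeg]
      omega
    have hz : aeval x g = 0 := by
      apply hfaith
      · simp [hg, hCH]
      · simp [hg]
      · simp [hg]
    have := apply_aeval_monic h1 hx hf hgm hgd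
    rw [hz, map_zero] at this
    exact hfx this.symm
  set P := aeval x (ρ x).charpoly with hP
  have hPU : P ∈ U ^ (l + 1) := aeval_mem_pow h1 hx (hdeg x).le
  have hfxP : f (x * P) ≠ 0 := by
    have := apply_aeval_monic h1 hx hf (monic_X.mul (hmon x))
      (by rw [monic_X.natDegree_mul (hmon x), natDegree_X, hdeg]; omega)
    rw [map_mul, aeval_X] at this
    rw [hP, this]; exact hfx
  have hε : ∀ y ∈ U, β y = 0 → ε₁ y = ε₂ y := by
    intro y hy hy0
    -- The left side vanishes on `V`, since `ρ P = 0`, and under `ε₁` and `ε₂`.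
    have e : (ε₁ x - ε₂ x) • (P * y) - (ε₁ y - ε₂ y) • (x * P)
        - (ε₁ x * ε₂ y - ε₂ x * ε₁ y) • P = 0 := by
      apply hfaith
      · simp [hP, hCH]
      · simp; ring
      · simp; ring
    have h0 : f (P * y) = 0 := by
      simpa using hrank (l + 1) 0 rfl P hPU y hy hy0 1
        (by rw [pow_zero]; exact Submodule.one_le.1 le_rfl)
    have := congrArg f e
    simp only [map_sub, map_smul, h0, hf P hPU, smul_eq_mul, map_zero] at this
    have h5 : (ε₁ y - ε₂ y) * f (x * P) = 0 := by linear_combination -this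
    exact sub_eq_zero.1 ((mul_eq_zero.1 h5).resolve_right hfxP)
  set Y : Submodule F A := U ⊓ (LinearMap.ker β ⊓ LinearMap.ker ε₁.toLinearMap) with hYdef
  have hYU : Y ≤ U := inf_le_left
  have hYβ : ∀ y ∈ Y, β y = 0 := fun y hy => hy.2.1
  have hY1 : ∀ y ∈ Y, ε₁ y = 0 := fun y hy => hy.2.2
  have hY2 : ∀ y ∈ Y, ε₂ y = 0 := fun y hy => hε y hy.1 (hYβ y hy) ▸ hY1 y hy
  have hU : ∀ u ∈ U, ∃ c d : F, ∃ y ∈ Y, u = c • 1 + d • x + y := by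
    intro u hu
    refine ⟨ε₁ u - β u * ε₁ x, β u, u - (ε₁ u - β u * ε₁ x) • 1 - β u • x, ⟨?_, ?_, ?_⟩, by abel⟩
    · exact sub_mem (sub_mem hu (Submodule.smul_mem _ _ h1)) (Submodule.smul_mem _ _ hx)
    · simp [hβ1, hβx]
    · simp
  have hneY : ¬ wordFilt U Y (l + 2) ≤ wordFilt U Y (l + 1) := by
    intro hle
    -- A stationary filtration is a two-sided ideal; the quotient is generated by `x`.
    set I := wordFilt U Y (l + 1) with hI
    have hfI : ∀ v ∈ I, f v = 0 := fun v hv =>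
      wordFilt_le_of (l + 1) (N := LinearMap.ker f)
        (fun p q hpq v hv y hy v' hv' => hrank p q hpq v hv y (hYU hy) (hYβ y hy) v' hv') hv
    have hl : ∀ a : A, ∀ v ∈ I, a * v ∈ I := by
      intro a
      have : ∀ k, ∀ v ∈ I, ∀ a ∈ U ^ k, a * v ∈ I := by
        intro k
        induction k with
        | zero =>
          intro v hv a ha
          rw [pow_zero] at ha
          obtain ⟨c, rfl⟩ := Submodule.mem_one.1 ha
          simpa [Algebra.algebraMap_eq_smul_one] using Submodule.smul_mem _ c hv
        | succ k ih =>
          intro v hv a ha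
          rw [pow_succ] at ha
          refine (Submodule.mul_le (P := I.comap (LinearMap.mulRight F v))).2 ?_ ha
          intro a ha u hu
          simpa [mul_assoc] using ih _ (hle (mul_mem_wordFilt_left hu hv)) a ha
      exact fun v hv => this (l + 2) v hv a (htop ▸ Submodule.mem_top)
    have hr : ∀ a : A, ∀ v ∈ I, v * a ∈ I := by
      intro a
      have : ∀ k, ∀ v ∈ I, ∀ a ∈ U ^ k, v * a ∈ I := by
        intro k
        induction k with
        | zero =>
          intro v hv a ha
          rw [pow_zero] at ha
          obtain ⟨c, rfl⟩ := Submodule.mem_one.1 ha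
          simpa [Algebra.algebraMap_eq_smul_one] using Submodule.smul_mem _ c hv
        | succ k ih =>
          intro v hv a ha
          rw [pow_succ'] at ha
          refine (Submodule.mul_le (P := I.comap (LinearMap.mulLeft F v))).2 ?_ ha
          intro u hu a ha
          simpa [mul_assoc] using ih _ (hle (mul_mem_wordFilt_right hu hv)) a ha
      exact fun v hv => this (l + 2) v hv a (htop ▸ Submodule.mem_top)
    have hYI : ∀ y ∈ Y, y ∈ I := fun y hy =>
      wordFilt_mono h1 (Nat.zero_le (l + 1)) (show y ∈ wordFilt U Y 0 from hy)
    have hcomm : ∀ b : A, (∀ u ∈ U, u * b - b * u ∈ I) → ∀ a, a * b - b * a ∈ I := by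
      intro b hb a
      have : ∀ k, U ^ k ≤ I.comap (LinearMap.mulRight F b - LinearMap.mulLeft F b) := by
        intro k
        induction k with
        | zero => rw [pow_zero, Submodule.one_le]; simp
        | succ k ih =>
          rw [pow_succ]
          refine Submodule.mul_le.2 fun v hv u hu => ?_
          have h2 : v * b - b * v ∈ I := ih hv
          have h3 := add_mem (hl v _ (hb u hu)) (hr u _ h2)
          have e : v * u * b - b * (v * u) = v * (u * b - b * u) + (v * b - b * v) * u := by
            noncomm_ring
          simpa [e] using h3
      exact this (l + 2) (htop ▸ Submodule.mem_top : a ∈ U ^ (l + 2))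
    have hUU : ∀ u ∈ U, ∀ v ∈ U, u * v - v * u ∈ I := by
      intro u hu v hv
      obtain ⟨c, d, y, hy, rfl⟩ := hU u hu
      obtain ⟨c', d', y', hy', rfl⟩ := hU v hv
      have e : (c • 1 + d • x + y) * (c' • 1 + d' • x + y') -
          (c' • 1 + d' • x + y') * (c • 1 + d • x + y) =
          d • (x * y' - y' * x) + d' • (y * x - x * y) + (y * y' - y' * y) := by
        simp only [mul_add, add_mul, mul_smul_comm, smul_mul_assoc, mul_one, one_mul, smul_add,
          smul_sub, smul_comm d' d, smul_comm c' d, smul_comm c' c, smul_comm d' c]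
        abel
      rw [e]
      have hyI := hYI y hy
      have hyI' := hYI y' hy'
      exact add_mem (add_mem (Submodule.smul_mem _ _ (sub_mem (hl _ _ hyI') (hr _ _ hyI')))
        (Submodule.smul_mem _ _ (sub_mem (hr _ _ hyI) (hl _ _ hyI))))
        (sub_mem (hl _ _ hyI') (hr _ _ hyI'))
    have hall : ∀ a b : A, a * b - b * a ∈ I := fun a b => by
      refine hcomm b (fun u hu => ?_) a
      have := hcomm u (fun v hv => hUU v hv u hu) b
      rw [← neg_sub]; exact neg_mem this
    obtain ⟨q, hq, hqd, hqI⟩ := exists_monic_aeval_mem (hab I hl hr hall) hl x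
      (show 4 ≤ l + 1 + 1 by omega)
    have := apply_aeval_monic h1 hx hf hq hqd
    rw [hfI _ hqI] at this
    exact hfx this.symm
  have hYpos : 1 ≤ Module.finrank F Y := by
    rw [Nat.one_le_iff_ne_zero]
    intro h0
    have hb : Y = ⊥ := Submodule.finrank_eq_zero.1 h0
    have : ∀ j, wordFilt U Y j ≤ ⊥ := fun j => wordFilt_le_of j fun p q _ v _ y hy v' _ => by
      rw [hb, Submodule.mem_bot] at hy
      simp [hy]
    exact hneY ((this _).trans bot_le)
  obtain ⟨z, hz, y, hy, hzy⟩ := exists_pow_notMem hYU hx hU hneY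
    (thin_top h1 hYU hx hU hneY (by omega))
  have hlow := natDegree_sub_X_pow_le (hmon z) (hdeg z)
  rcases hzy with hzy | hzy
  · have h0 : aeval z (ρ z).charpoly * y = 0 := by
      apply hfaith <;> simp [hCH, hY1 y hy, hY2 y hy]
    have hm : z ^ (l + 1) * y ∈ wordFilt U Y l := by
      have : aeval z ((ρ z).charpoly - X ^ (l + 1)) * y ∈ wordFilt U Y l :=
        pow_mul_le_wordFilt l (Submodule.mul_mem_mul (aeval_mem_pow h1 hz hlow) hy)
      rw [map_sub, sub_mul, h0, zero_sub, map_pow, aeval_X] at this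
      simpa using neg_mem this
    apply hzy
    rw [pow_succ', mul_assoc]
    exact mul_mem_wordFilt_left hz hm
  · have h0 : y * aeval z (ρ z).charpoly = 0 := by
      apply hfaith <;> simp [hCH, hY1 y hy, hY2 y hy]
    have hm : y * z ^ (l + 1) ∈ wordFilt U Y l := by
      have : y * aeval z ((ρ z).charpoly - X ^ (l + 1)) ∈ wordFilt U Y l :=
        mul_pow_le_wordFilt l (Submodule.mul_mem_mul hy (aeval_mem_pow h1 hz hlow))
      rw [map_sub, mul_sub, h0, zero_sub, map_pow, aeval_X] at this
      simpa using neg_mem this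
    apply hzy
    rw [pow_succ, ← mul_assoc]
    exact mul_mem_wordFilt_right hz hm
end bound

end abstract

/-! ### The group algebra of the dihedral group -/

section dihedral
open DihedralGroup Polynomial

variable {F : Type*} [Field F] {n : ℕ}

lemma finrank_dihedral [NeZero n] :
    Module.finrank F (MonoidAlgebra F (DihedralGroup n)) = 2 * n := by
  rw [Module.finrank_eq_card_basis (MonoidAlgebra.basis (DihedralGroup n) F), DihedralGroup.card]

/-- A linear map expanded in the basis of rotations and reflections. -/
lemma linearMap_apply_dihedral [NeZero n] {M : Type*} [AddCommGroup M] [Module F M]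
    (φ : MonoidAlgebra F (DihedralGroup n) →ₗ[F] M) (z : MonoidAlgebra F (DihedralGroup n)) :
    φ z = ∑ i, z.coeff (r i) • φ (MonoidAlgebra.single (r i) 1) +
      ∑ i, z.coeff (sr i) • φ (MonoidAlgebra.single (sr i) 1) := by
  induction z using MonoidAlgebra.induction_linear with
  | zero => simp
  | add f g hf hg =>
    rw [map_add, hf, hg]
    simp only [MonoidAlgebra.coeff_add, Finsupp.add_apply, add_smul, Finset.sum_add_distrib]
    abel
  | single g c =>
    have hc : (MonoidAlgebra.single g c : MonoidAlgebra F (DihedralGroup n)) =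
      c • MonoidAlgebra.single g 1 := by simp
    rw [hc, map_smul]
    rcases g with i | i
    · rw [Finset.sum_eq_single i, Finset.sum_eq_zero] <;>
        simp +contextual [eq_comm]
    · rw [Finset.sum_eq_zero, Finset.sum_eq_single i] <;>
        simp +contextual [eq_comm]

/-- The permutation representation on functions on the vertices `ZMod n` of the `n`-gon, where `r i`
sends the vertex `m` to `m + i` and `sr i` sends it to `-(m + i)`. A group element acts on functions
through its inverse. -/
def vertexRep (F : Type*) [Field F] (n : ℕ) : DihedralGroup n →* Module.End F (ZMod n → F) where
  toFun
    | r i => LinearMap.funLeft F F fun m => m - i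
    | sr i => LinearMap.funLeft F F fun m => -(m + i)
  map_one' := by
    rw [DihedralGroup.one_def]
    ext v m
    simp [LinearMap.funLeft_apply]
  map_mul' g h := by
    rcases g with i | i <;> rcases h with j | j <;>
    · simp only [r_mul_r, r_mul_sr, sr_mul_r, sr_mul_sr]
      refine LinearMap.ext fun v => funext fun m => ?_
      simp only [LinearMap.funLeft_apply, Module.End.mul_apply]
      congr 1
      ring

/-- The linear character of `D_n` that extends a character `σ` of the rotations, invariant under
inversion, and takes the value `-σ i` on the reflection `sr i`. -/
def signChar (σ : ZMod n → F) (h0 : σ 0 = 1) (hadd : ∀ s t, σ (s + t) = σ s * σ t)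
    (hneg : ∀ s, σ (-s) = σ s) : DihedralGroup n →* F where
  toFun
    | r i => σ i
    | sr i => -σ i
  map_one' := by rw [DihedralGroup.one_def]; exact h0
  map_mul' g h := by
    rcases g with i | i <;> rcases h with j | j <;>
      simp [sub_eq_add_neg, hadd, hneg, mul_comm]

/-- The character of `ZMod n` of largest order at most two: the trivial one for odd `n`, and parity
for even `n`. Two residues with the same sign differ by an even one. -/
lemma exists_parity_char [NeZero n] (hn2 : (2 * n : F) ≠ 0) : ∃ σ : ZMod n → F,
    σ 0 = 1 ∧ (∀ s t, σ (s + t) = σ s * σ t) ∧ (∀ s, σ (-s) = σ s) ∧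
    (∀ s t, σ s * σ t = -1 ∨ ∃ j, t = s + 2 * j) ∧ ∀ s, ∑ t, (1 + σ s * σ t) ≠ 0 := by
  have h2 : (2 : F) ≠ 0 := left_ne_zero_of_mul hn2
  have hnF : (n : F) ≠ 0 := right_ne_zero_of_mul hn2
  rcases Nat.even_or_odd n with he | ⟨k, hk⟩
  · let c : ZMod n →+* ZMod 2 := ZMod.castHom he.two_dvd (ZMod 2)
    have hcases : ∀ a : ZMod 2, a = 0 ∨ a = 1 := by decide
    have h11 : (1 : ZMod 2) + 1 = 0 := by decide
    have hm1 : -(1 : ZMod 2) = 1 := by decide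
    have hadd : ∀ s t, (if c (s + t) = 0 then (1 : F) else -1) =
        (if c s = 0 then 1 else -1) * (if c t = 0 then 1 else -1) := by
      intro s t
      rcases hcases (c s) with hs | hs <;> rcases hcases (c t) with ht | ht <;>
        simp [hs, ht, h11]
    refine ⟨fun t => if c t = 0 then 1 else -1, by simp, hadd, ?_, ?_, ?_⟩
    · intro s
      simp
    · intro s t
      have hev : ∀ u : ZMod n, c u = 0 → ∃ j, u = 2 * j := by
        intro u hu
        have : ((u.val : ℕ) : ZMod 2) = 0 := by
          rw [← hu, ← map_natCast c, ZMod.natCast_zmod_val]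
        obtain ⟨j, hj⟩ := (ZMod.natCast_eq_zero_iff _ _).1 this
        exact ⟨j, by rw [← ZMod.natCast_zmod_val u, hj]; push_cast; rfl⟩
      rcases hcases (c s) with hs | hs <;> rcases hcases (c t) with ht | ht
      · obtain ⟨j, hj⟩ := hev (t - s) (by simp [hs, ht])
        exact Or.inr ⟨j, by rw [← hj]; ring⟩
      · left; simp [hs, ht]
      · left; simp [hs, ht]
      · obtain ⟨j, hj⟩ := hev (t - s) (by simp [hs, ht])
        exact Or.inr ⟨j, by rw [← hj]; ring⟩
    · intro s
      have hz : ∑ t : ZMod n, (if c t = 0 then (1 : F) else -1) = 0 := by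
        have h : ∑ t : ZMod n, (if c (t + 1) = 0 then (1 : F) else -1) =
            ∑ t : ZMod n, (if c t = 0 then (1 : F) else -1) :=
          Equiv.sum_comp (Equiv.addRight (1 : ZMod n)) fun t => if c t = 0 then (1 : F) else -1
        rw [Finset.sum_congr rfl fun t _ => hadd t 1, ← Finset.sum_mul, map_one,
          if_neg one_ne_zero] at h
        have h' : 2 * ∑ t : ZMod n, (if c t = 0 then (1 : F) else -1) = 0 := by
          linear_combination -h
        exact (mul_eq_zero.1 h').resolve_left h2
      rw [Finset.sum_add_distrib, ← Finset.mul_sum, hz]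
      simpa using hnF
  · refine ⟨fun _ => 1, rfl, by simp, by simp, fun s t => Or.inr ⟨(t - s) * (k + 1), ?_⟩, ?_⟩
    · have : (n : ZMod n) = 0 := ZMod.natCast_self n
      have e : (2 * k + 1 : ZMod n) = 0 := by
        have h' : ((2 * k + 1 : ℕ) : ZMod n) = 0 := by rw [← hk]; exact this
        exact_mod_cast h'
      linear_combination (s - t) * e
    · intro s
      simp only [mul_one, one_add_one_eq_two, Finset.sum_const, Finset.card_univ, ZMod.card,
        nsmul_eq_mul]
      rwa [mul_comm]

/-- Faithfulness of `End V × F × F` in coordinates: `c` and `d` are the coefficients at the rotations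
and at the reflections, `hcd` says that the element acts as zero on the vertices, and `h1`, `hσ` that
it is killed by the two characters. The first condition makes `c` invariant under translation by
`2 ZMod n` and gives `d = -c`; the characters then remove the remaining freedom. -/
lemma eq_zero_of_rep [NeZero n] {σ : ZMod n → F} (h2 : (2 : F) ≠ 0)
    (hpar : ∀ s t, σ s * σ t = -1 ∨ ∃ j, t = s + 2 * j)
    (hsum : ∀ s, ∑ t, (1 + σ s * σ t) ≠ 0) {c d : ZMod n → F}
    (hcd : ∀ m j, c (m - j) + d (-m - j) = 0) (h1 : ∑ t, c t - ∑ t, d t = 0)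
    (hσ : ∑ t, σ t * c t - ∑ t, σ t * d t = 0) : c = 0 ∧ d = 0 := by
  have hd : ∀ s, d s = - c s := fun s => by
    have := hcd 0 (-s)
    simp only [zero_sub, neg_neg, neg_zero] at this
    linear_combination this
  have hc2 : ∀ s j, c (s + 2 * j) = c s := fun s j => by
    have h'' := hcd (s + j) (-j)
    rw [hd, show s + j - -j = s + 2 * j by ring, show -(s + j) - -j = -s by ring] at h''
    have h4 := hcd s 0
    rw [hd, show s - 0 = s by ring, show -s - (0 : ZMod n) = -s by ring] at h4
    linear_combination h'' - h4
  simp only [hd, mul_neg, Finset.sum_neg_distrib, sub_neg_eq_add, ← two_mul] at h1 hσ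
  have h1' := (mul_eq_zero.1 h1).resolve_left h2
  have hσ' := (mul_eq_zero.1 hσ).resolve_left h2
  have hc : c = 0 := by
    funext s
    have e : (∑ t, (1 + σ s * σ t)) * c s = ∑ t, c t + σ s * ∑ t, σ t * c t := by
      rw [Finset.sum_mul, Finset.mul_sum, ← Finset.sum_add_distrib]
      refine Finset.sum_congr rfl fun t _ => ?_
      rcases hpar s t with h | ⟨j, rfl⟩
      · linear_combination (c s - c t) * h
      · rw [hc2]; ring
    rw [h1', hσ', mul_zero, add_zero] at e
    exact (mul_eq_zero.1 e).resolve_left (hsum s)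
  exact ⟨hc, funext fun s => by simp [hd, hc]⟩

/-- Modulo commutators, `r (i + 2)` equals `r i` and `sr (i + 2)` equals `sr i`. -/
lemma finrank_quotient_le_four [NeZero n] (I : Submodule F (MonoidAlgebra F (DihedralGroup n)))
    (hl : ∀ a, ∀ v ∈ I, a * v ∈ I) (hc : ∀ a b, a * b - b * a ∈ I) :
    Module.finrank F (MonoidAlgebra F (DihedralGroup n) ⧸ I) ≤ 4 := by
  let R : ZMod n → MonoidAlgebra F (DihedralGroup n) := fun i => MonoidAlgebra.single (r i) 1
  let T : ZMod n → MonoidAlgebra F (DihedralGroup n) := fun i => MonoidAlgebra.single (sr i) 1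
  have hR : ∀ i, I.mkQ (R (i + 2)) = I.mkQ (R i) := fun i => by
    rw [← sub_eq_zero, ← map_sub, Submodule.mkQ_apply, Submodule.Quotient.mk_eq_zero]
    have h := hl (R (i + 1)) _ (hc (T 0) (T 1))
    have e : R (i + 1) * (T 0 * T 1 - T 1 * T 0) = R (i + 2) - R i := by
      simp only [R, T, mul_sub, MonoidAlgebra.single_mul_single, sr_mul_sr, r_mul_r, mul_one]
      ring_nf
    rwa [e] at h
  have hT : ∀ i, I.mkQ (T (i + 2)) = I.mkQ (T i) := fun i => by
    rw [← sub_eq_zero, ← map_sub, Submodule.mkQ_apply, Submodule.Quotient.mk_eq_zero]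
    have h := hc (T (i + 1)) (R 1)
    have e : T (i + 1) * R 1 - R 1 * T (i + 1) = T (i + 2) - T i := by
      simp only [R, T, MonoidAlgebra.single_mul_single, sr_mul_r, r_mul_sr, mul_one]
      ring_nf
    rwa [e] at h
  let w : Fin 4 → MonoidAlgebra F (DihedralGroup n) ⧸ I :=
    ![I.mkQ (R 0), I.mkQ (R 1), I.mkQ (T 0), I.mkQ (T 1)]
  have hw : ∀ i, w i ∈ Submodule.span F (Set.range w) := fun i =>
    Submodule.subset_span (Set.mem_range_self i)
  have hstep : ∀ g : ZMod n → MonoidAlgebra F (DihedralGroup n),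
      (∀ i, I.mkQ (g (i + 2)) = I.mkQ (g i)) → I.mkQ (g 0) ∈ Submodule.span F (Set.range w) →
      I.mkQ (g 1) ∈ Submodule.span F (Set.range w) →
      ∀ i, I.mkQ (g i) ∈ Submodule.span F (Set.range w) := by
    intro g hg h0 h1 i
    have : ∀ k : ℕ, I.mkQ (g k) ∈ Submodule.span F (Set.range w) ∧
        I.mkQ (g (k + 1 : ℕ)) ∈ Submodule.span F (Set.range w) := by
      intro k
      induction k with
      | zero => simpa using ⟨h0, h1⟩
      | succ k ih =>
        refine ⟨ih.2, ?_⟩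
        have e : ((k + 1 + 1 : ℕ) : ZMod n) = (k : ZMod n) + 2 := by push_cast; ring
        rw [e, hg]
        exact ih.1
    have h := (this i.val).1
    rwa [ZMod.natCast_zmod_val] at h
  have htop : Submodule.span F (Set.range w) = ⊤ := by
    rw [eq_top_iff]
    rintro q -
    obtain ⟨z, rfl⟩ := I.mkQ_surjective q
    rw [linearMap_apply_dihedral I.mkQ z]
    exact add_mem
      (sum_mem fun i _ => Submodule.smul_mem _ _ (hstep R hR (hw 0) (hw 1) i))
      (sum_mem fun i _ => Submodule.smul_mem _ _ (hstep T hT (hw 2) (hw 3) i))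
  rw [← finrank_top, ← htop]
  simpa [Set.finrank] using finrank_range_le_card (R := F) w

lemma exists_pow_eq_top {A : Type*} [Ring A] [Algebra F A] [FiniteDimensional F A] {S : Set A}
    (hS : Algebra.adjoin F S = ⊤) : ∃ k, (Submodule.span F ({1} ∪ S)) ^ k = ⊤ := by
  set U := Submodule.span F ({1} ∪ S) with hU
  have h1 : (1 : A) ∈ U := Submodule.subset_span (by simp)
  have hmono : Monotone fun k : ℕ => U ^ k := pow_mono_of_one_mem h1
  obtain ⟨k, hk⟩ := monotone_stabilizes_iff_noetherian.2 (inferInstance : IsNoetherian F A)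
    ⟨fun k => U ^ k, hmono⟩
  have hk' : ∀ m, k ≤ m → U ^ k = U ^ m := hk
  have h1k : (1 : A) ∈ U ^ k := by
    have h : (1 : A) ∈ U ^ 0 := by rw [pow_zero]; exact Submodule.one_le.1 le_rfl
    exact hmono (Nat.zero_le k) h
  refine ⟨k, eq_top_iff.2 fun a _ => ?_⟩
  have ha : a ∈ Algebra.adjoin F S := hS ▸ Algebra.mem_top
  induction ha using Algebra.adjoin_induction with
  | mem x hx =>
    rw [hk' (k + 1) (by omega)]
    refine hmono (show 1 ≤ k + 1 by omega) (show x ∈ U ^ 1 from ?_)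
    rw [pow_one]
    exact Submodule.subset_span (Set.mem_union_right {1} hx)
  | algebraMap c => rw [Algebra.algebraMap_eq_smul_one]; exact Submodule.smul_mem _ _ h1k
  | add x y _ _ hx hy => exact add_mem (hx trivial) (hy trivial)
  | mul x y _ _ hx hy =>
    rw [hk' (k + k) (by omega), pow_add]
    exact Submodule.mul_mem_mul (hx trivial) (hy trivial)

/-- The upper bound: `pow_eq_top` for the dihedral group algebra. -/
lemma Lk_eq_top (hn : 3 ≤ n) (hn2 : (2 * n : F) ≠ 0)
    {S : Set (MonoidAlgebra F (DihedralGroup n))} (hS : Algebra.adjoin F S = ⊤) :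
    Lk F S n = ⊤ := by
  have : NeZero n := ⟨by omega⟩
  have : FiniteDimensional F (MonoidAlgebra F (DihedralGroup n)) :=
    (MonoidAlgebra.basis (DihedralGroup n) F).finiteDimensional_of_finite
  obtain ⟨σ, h0, hadd, hneg, hpar, hsum⟩ := exists_parity_char (F := F) (n := n) hn2
  let ρ := MonoidAlgebra.lift F _ _ (vertexRep F n)
  let ε₁ := MonoidAlgebra.lift F _ _ (signChar (n := n) (fun _ => (1 : F)) rfl (by simp) (by simp))
  let ε₂ := MonoidAlgebra.lift F _ _ (signChar σ h0 hadd hneg)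
  refine pow_eq_top hn finrank_dihedral (V := ZMod n → F) (by simp) ρ ε₁ ε₂ ?_ ?_
    (fun I hl _ hc => finrank_quotient_le_four I hl hc)
    (Submodule.subset_span (by simp)) (exists_pow_eq_top hS)
  · intro z hρ h1 hσ
    have e1 := linearMap_apply_dihedral ε₁.toLinearMap z
    have e2 := linearMap_apply_dihedral ε₂.toLinearMap z
    have e3 := linearMap_apply_dihedral ρ.toLinearMap z
    simp only [AlgHom.toLinearMap_apply, hρ, h1, hσ, ρ, ε₁, ε₂, MonoidAlgebra.lift_single,
      one_smul] at e1 e2 e3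
    simp only [signChar, MonoidHom.coe_mk, OneHom.coe_mk, smul_eq_mul, mul_one, mul_neg,
      Finset.sum_neg_distrib] at e1 e2
    obtain ⟨hc, hd⟩ := eq_zero_of_rep (left_ne_zero_of_mul hn2) hpar hsum
      (c := fun i => z.coeff (r i)) (d := fun i => z.coeff (sr i))
      (fun m j => by
        have := congrFun (LinearMap.congr_fun e3 (Pi.single j 1)) m
        simp only [vertexRep, MonoidHom.coe_mk, OneHom.coe_mk, LinearMap.add_apply,
          LinearMap.sum_apply, LinearMap.smul_apply, Pi.add_apply, Finset.sum_apply, Pi.smul_apply,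
          LinearMap.funLeft_apply, LinearMap.zero_apply, Pi.zero_apply, smul_eq_mul,
          Pi.single_apply, mul_ite, mul_one, mul_zero] at this
        have i1 : ∀ x : ZMod n, m - x = j ↔ x = m - j := fun x =>
          ⟨fun h => by rw [← h]; ring, fun h => by rw [h]; ring⟩
        have i2 : ∀ x : ZMod n, -(m + x) = j ↔ x = -m - j := fun x =>
          ⟨fun h => by rw [← h]; ring, fun h => by rw [h]; ring⟩
        simp only [i1, i2, Finset.sum_ite_eq', Finset.mem_univ, if_true] at this
        exact this.symm)
      (by rw [sub_eq_add_neg]; exact e1.symm)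
      (by rw [sub_eq_add_neg]; simpa only [mul_comm] using e2.symm)
    apply MonoidAlgebra.coeff_injective
    ext g
    rcases g with i | i
    · exact congrFun hc i
    · exact congrFun hd i
  · refine ⟨MonoidAlgebra.single (r 1) 1, MonoidAlgebra.single (sr 0) 1, fun h => ?_⟩
    rw [MonoidAlgebra.single_mul_single, MonoidAlgebra.single_mul_single, mul_one,
      MonoidAlgebra.single_left_inj one_ne_zero, r_mul_sr, sr_mul_r, sr.injEq] at h
    have h2 : ((2 : ℕ) : ZMod n) = 0 := by push_cast; linear_combination -h
    have := Nat.le_of_dvd two_pos ((ZMod.natCast_eq_zero_iff _ _).1 h2)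
    omega

/-! ### A generating set of length `n` -/

/-- The closed walk through `D_n` along its Cayley graph for the reflections `sr 0` and `sr 1`: the
even number `2 i` goes to `r i`, the odd number `2 i - 1` to `sr i`. -/
def zigzag (n : ℕ) (m : ℤ) : DihedralGroup n :=
  if Even m then r ((m / 2 : ℤ) : ZMod n) else sr (((m + 1) / 2 : ℤ) : ZMod n)

lemma zigzag_even (i : ℤ) : zigzag n (2 * i) = r (i : ZMod n) := by
  simp [zigzag]

lemma zigzag_odd (i : ℤ) : zigzag n (2 * i - 1) = sr (i : ZMod n) := by
  have : ¬ Even (2 * i - 1) := by rw [Int.not_even_iff_odd]; exact ⟨i - 1, by ring⟩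
  simp [zigzag, this]

/-- The two reflections `sr 0` and `sr 1`, as elements of the group algebra. -/
def reflections (F : Type*) [Field F] (n : ℕ) : Set (MonoidAlgebra F (DihedralGroup n)) :=
  {MonoidAlgebra.single (sr 0) 1, MonoidAlgebra.single (sr 1) 1}

lemma adjoin_reflections [NeZero n] : Algebra.adjoin F (reflections F n) = ⊤ := by
  set B := Algebra.adjoin F (reflections F n)
  have h0 : MonoidAlgebra.single (sr 0) 1 ∈ B := Algebra.subset_adjoin (by simp [reflections])
  have h1 : MonoidAlgebra.single (sr 1) 1 ∈ B := Algebra.subset_adjoin (by simp [reflections])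
  have hr1 : MonoidAlgebra.single (r 1) 1 ∈ B := by
    simpa [MonoidAlgebra.single_mul_single] using mul_mem h0 h1
  have hr : ∀ i, MonoidAlgebra.single (r i) 1 ∈ B := fun i => by
    have := pow_mem hr1 i.val
    rwa [MonoidAlgebra.single_pow, one_pow, r_one_pow, ZMod.natCast_zmod_val] at this
  have hs : ∀ i, MonoidAlgebra.single (sr i) 1 ∈ B := fun i => by
    simpa [MonoidAlgebra.single_mul_single] using mul_mem h0 (hr i)
  refine eq_top_iff.2 fun z _ => ?_
  have := linearMap_apply_dihedral LinearMap.id z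
  simp only [LinearMap.id_apply] at this
  rw [this]
  exact add_mem (sum_mem fun i _ => B.smul_mem (hr i) _) (sum_mem fun i _ => B.smul_mem (hs i) _)

open Classical in
/-- Multiplying by one of the two reflections moves one step along the walk `zigzag`. -/
lemma Lk_reflections_le (k : ℕ) : Lk F (reflections F n) k ≤ Submodule.span F
    ((Finset.Icc (-k : ℤ) k).image fun m => MonoidAlgebra.single (zigzag n m) (1 : F)) := by
  induction k with
  | zero =>
    have : zigzag n 0 = 1 := by simpa using zigzag_even (n := n) 0
    rw [Lk, pow_zero, Submodule.one_le]
    exact Submodule.subset_span (by simp [this, MonoidAlgebra.one_def])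
  | succ k ih =>
    rw [Lk, pow_succ']
    refine (mul_le_mul' le_rfl ih).trans ?_
    rw [Submodule.span_mul_span, Submodule.span_le]
    rintro _ ⟨u, hu, v, hv, rfl⟩
    obtain ⟨m, hm, rfl⟩ := Finset.mem_image.1 (Finset.mem_coe.1 hv)
    rw [Finset.mem_Icc] at hm
    suffices ∃ m', m - 1 ≤ m' ∧ m' ≤ m + 1 ∧
        u * MonoidAlgebra.single (zigzag n m) 1 = MonoidAlgebra.single (zigzag n m') 1 by
      obtain ⟨m', h1, h2, e⟩ := this
      simp only [e]
      exact Submodule.subset_span (Finset.mem_coe.2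
        (Finset.mem_image.2 ⟨m', Finset.mem_Icc.2 ⟨by push_cast; omega, by push_cast; omega⟩, rfl⟩))
    have hm2 : ∃ i, m = 2 * i ∨ m = 2 * i - 1 := ⟨(m + 1) / 2, by omega⟩
    simp only [reflections, Set.singleton_union, Set.mem_insert_iff, Set.mem_singleton_iff] at hu
    obtain ⟨i, rfl | rfl⟩ := hm2 <;> rcases hu with rfl | rfl | rfl
    · exact ⟨2 * i, by omega, by omega, one_mul _⟩
    · refine ⟨2 * i - 1, by omega, by omega, ?_⟩
      rw [zigzag_even, zigzag_odd, MonoidAlgebra.single_mul_single, sr_mul_r]; simp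
    · refine ⟨2 * (i + 1) - 1, by omega, by omega, ?_⟩
      rw [zigzag_even, zigzag_odd, MonoidAlgebra.single_mul_single, sr_mul_r]; simp [add_comm]
    · exact ⟨2 * i - 1, by omega, by omega, one_mul _⟩
    · refine ⟨2 * i, by omega, by omega, ?_⟩
      rw [zigzag_even, zigzag_odd, MonoidAlgebra.single_mul_single, sr_mul_sr]; simp
    · refine ⟨2 * (i - 1), by omega, by omega, ?_⟩
      rw [zigzag_even, zigzag_odd, MonoidAlgebra.single_mul_single, sr_mul_sr]; simp

lemma Lk_reflections_ne_top [NeZero n] {k : ℕ} (hk : k < n) : Lk F (reflections F n) k ≠ ⊤ := by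
  classical
  intro h
  have hle := Lk_reflections_le (F := F) (n := n) k
  rw [h, top_le_iff] at hle
  have hcard := finrank_span_finset_le_card (R := F)
    ((Finset.Icc (-k : ℤ) k).image fun m => MonoidAlgebra.single (zigzag n m) (1 : F))
  have hi := Finset.card_image_le (s := Finset.Icc (-k : ℤ) k)
    (f := fun m => MonoidAlgebra.single (zigzag n m) (1 : F))
  rw [Int.card_Icc] at hi
  rw [Set.finrank, hle, finrank_top, finrank_dihedral] at hcard
  omega

end dihedral

theorem stmt_19 (F : Type*) [Field F] (n : ℕ) (hn : 3 ≤ n)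
    (hchar : ¬ (ringChar F ∣ 2 * n)) :
    (∀ S : Set (MonoidAlgebra F (DihedralGroup n)),
        Algebra.adjoin F S = ⊤ → lenS F S ≤ n) ∧
    ∃ S : Set (MonoidAlgebra F (DihedralGroup n)),
        Algebra.adjoin F S = ⊤ ∧ lenS F S = n := by
  have hn2 : (2 * n : F) ≠ 0 := fun h => hchar ((ringChar.spec F _).1 (by exact_mod_cast h))
  have : NeZero n := ⟨by omega⟩
  have hle : ∀ S : Set (MonoidAlgebra F (DihedralGroup n)),
      Algebra.adjoin F S = ⊤ → lenS F S ≤ n := fun S hS => Nat.sInf_le (Lk_eq_top hn hn2 hS)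
  refine ⟨hle, reflections F n, adjoin_reflections, ?_⟩
  refine (hle _ adjoin_reflections).antisymm (not_lt.1 fun hlt => ?_)
  have hmem : Lk F (reflections F n) (lenS F (reflections F n)) = ⊤ :=
    Nat.sInf_mem (s := {k | Lk F (reflections F n) k = ⊤})
      ⟨n, Lk_eq_top hn hn2 adjoin_reflections⟩
  exact Lk_reflections_ne_top hlt hmem
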